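/- Fix real exponents p, r, γ with 1 < p < r and 0 < γ < 1, and constants S > 0, c₅ > 0, c₆ > 0. Then there exist c₇ > 0 and λ* > 0 such that: for every λ ∈ (0, λ*), every X > 0, and all reals A, B, C with A ≥ S·X^p, 0 < B ≤ c₅·X^{1−γ}, and 0 ≤ C ≤ c₆·X^r, one has sup_{t>0} [t^{p−r}·A − t^{1−r−γ}·B] − λ·C ≥ (c₇ − λ·c₆)·X^r > 0. (Abstract form of estimate (10) in the paper: the maximum of the reduced fiber function strictly exceeds λ‖u‖_r^r uniformly in u for all small λ.) -/

import Mathlib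

open Real

open Set Filter Topology

/-!
The reduced fiber function is homogeneous: if `(A, B)` is replaced by `(X ^ p * A, X ^ (1 - γ) * B)`
and `t` by `t / X`, its value is multiplied by `X ^ r`. It is also monotone in `A` and antitone
in `B`, so its supremum is at least `X ^ r` times any value taken by the function with
coefficients `S` and `c₅`. That function is positive for large `t`, because
`t ^ (p + γ - 1)` tends to infinity; any positive value of it serves as `c₇`.

Since `sSup` of an unbounded set of reals is `0`, the comparison needs the function to be bounded
above: near `0` the term in `B > 0` dominates, and away from `0` the term in `A` is bounded.
-/

/-- The reduced fiber function `ŵ(t) = t ^ (p - r) A - t ^ (1 - r - γ) B` of the paper, with the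
integrals `A = ‖∇u‖_p^p` and `B = ∫ a |u|^(1 - γ)` as free parameters. It is meant for `t > 0`. -/
noncomputable def reducedFiber (p r γ A B t : ℝ) : ℝ :=
  t ^ (p - r) * A - t ^ (1 - r - γ) * B

section ReducedFiber

variable {p r γ A A' B B' t X : ℝ}

theorem reducedFiber_eq_mul (ht : 0 < t) :
    reducedFiber p r γ A B t = t ^ (1 - r - γ) * (t ^ (p + γ - 1) * A - B) := by
  have hsplit : t ^ (p - r) = t ^ (1 - r - γ) * t ^ (p + γ - 1) := by
    rw [← rpow_add ht]
    ring_nf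
  rw [reducedFiber, hsplit]
  ring

theorem reducedFiber_le_reducedFiber (ht : 0 ≤ t) (hA : A ≤ A') (hB : B' ≤ B) :
    reducedFiber p r γ A B t ≤ reducedFiber p r γ A' B' t := by
  unfold reducedFiber
  gcongr

theorem reducedFiber_div (ht : 0 ≤ t) (hX : 0 < X) :
    reducedFiber p r γ (A * X ^ p) (B * X ^ (1 - γ)) (t / X)
      = X ^ r * reducedFiber p r γ A B t := by
  have hXp : X ^ p = X ^ (p - r) * X ^ r := by
    rw [← rpow_add hX, sub_add_cancel]
  have hXγ : X ^ (1 - γ) = X ^ (1 - r - γ) * X ^ r := by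
    rw [← rpow_add hX]
    ring_nf
  rw [reducedFiber, reducedFiber, div_rpow ht hX.le, div_rpow ht hX.le, hXp, hXγ]
  field_simp

theorem exists_reducedFiber_pos (hpγ : 1 - γ < p) (hA : 0 < A) (r B : ℝ) :
    ∃ t, 0 < t ∧ 0 < reducedFiber p r γ A B t := by
  have hlim : Tendsto (fun t : ℝ ↦ t ^ (p + γ - 1) * A) atTop atTop :=
    (tendsto_rpow_atTop (by linarith)).atTop_mul_const hA
  obtain ⟨t, ht, hBt⟩ := ((eventually_gt_atTop 0).and (hlim.eventually_gt_atTop B)).exists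
  refine ⟨t, ht, ?_⟩
  rw [reducedFiber_eq_mul ht]
  exact mul_pos (rpow_pos_of_pos ht _) (sub_pos.2 hBt)

theorem bddAbove_image_reducedFiber (hpγ : 1 - γ < p) (hpr : p ≤ r) (hB : 0 < B) (A : ℝ) :
    BddAbove (reducedFiber p r γ A B '' Ioi 0) := by
  have hq : 0 < p + γ - 1 := by linarith
  have hlim : Tendsto (fun t : ℝ ↦ t ^ (p + γ - 1) * |A|) (𝓝[>] 0) (𝓝 0) := by
    have hcont : Continuous fun t : ℝ ↦ t ^ (p + γ - 1) * |A| :=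
      (continuous_rpow_const hq.le).mul_const _
    exact (hcont.tendsto' 0 0 (by simp [zero_rpow hq.ne'])).mono_left nhdsWithin_le_nhds
  obtain ⟨t₀, ht₀B, ht₀ : 0 < t₀⟩ :=
    ((hlim.eventually_lt_const hB).and self_mem_nhdsWithin).exists
  refine ⟨t₀ ^ (p - r) * |A|, forall_mem_image.2 fun t (ht : 0 < t) ↦ ?_⟩
  calc
    reducedFiber p r γ A B t ≤ reducedFiber p r γ |A| B t :=
      reducedFiber_le_reducedFiber ht.le (le_abs_self A) le_rfl
    _ ≤ t₀ ^ (p - r) * |A| := by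
      rcases le_total t t₀ with h | h
      · have hneg : t ^ (p + γ - 1) * |A| - B ≤ 0 := by
          have : t ^ (p + γ - 1) * |A| ≤ t₀ ^ (p + γ - 1) * |A| := by gcongr
          linarith
        calc
          reducedFiber p r γ |A| B t = t ^ (1 - r - γ) * (t ^ (p + γ - 1) * |A| - B) :=
            reducedFiber_eq_mul ht
          _ ≤ 0 := mul_nonpos_of_nonneg_of_nonpos (by positivity) hneg
          _ ≤ t₀ ^ (p - r) * |A| := by positivity
      · calc
          reducedFiber p r γ |A| B t ≤ t ^ (p - r) * |A| := sub_le_self _ (by positivity)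
          _ ≤ t₀ ^ (p - r) * |A| := by
            gcongr ?_ * |A|
            exact rpow_le_rpow_of_nonpos ht₀ h (by linarith)

theorem rpow_mul_reducedFiber_le_sSup (hpγ : 1 - γ < p) (hpr : p ≤ r) (ht : 0 < t) (hX : 0 < X)
    (hA : A * X ^ p ≤ A') (hB₀ : 0 < B') (hB : B' ≤ B * X ^ (1 - γ)) :
    X ^ r * reducedFiber p r γ A B t ≤ sSup (reducedFiber p r γ A' B' '' Ioi 0) :=
  have htX : 0 < t / X := div_pos ht hX
  calc
    X ^ r * reducedFiber p r γ A B t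
        = reducedFiber p r γ (A * X ^ p) (B * X ^ (1 - γ)) (t / X) :=
      (reducedFiber_div ht.le hX).symm
    _ ≤ reducedFiber p r γ A' B' (t / X) := reducedFiber_le_reducedFiber htX.le hA hB
    _ ≤ sSup (reducedFiber p r γ A' B' '' Ioi 0) :=
      le_csSup (bddAbove_image_reducedFiber hpγ hpr hB₀ A') (mem_image_of_mem _ htX)

end ReducedFiber

theorem fiber_sup_exceeds_general {p r γ S c₆ : ℝ} (c₅ : ℝ)
    (hpγ : 1 - γ < p) (hpr : p ≤ r) (hS : 0 < S) (hc₆ : 0 < c₆) :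
    ∃ c₇ > 0, ∃ lamStar > 0, ∀ lam : ℝ, 0 ≤ lam → lam < lamStar →
      ∀ X : ℝ, 0 < X → ∀ A B C : ℝ,
        S * X ^ p ≤ A → 0 < B → B ≤ c₅ * X ^ (1 - γ) → C ≤ c₆ * X ^ r →
        sSup (reducedFiber p r γ A B '' Ioi 0) - lam * C ≥ (c₇ - lam * c₆) * X ^ r
          ∧ 0 < (c₇ - lam * c₆) * X ^ r := by
  obtain ⟨t, ht, hpos⟩ := exists_reducedFiber_pos hpγ hS r c₅
  refine ⟨_, hpos, _, div_pos hpos hc₆, fun lam hlam hlt X hX A B C hA hB hBX hC ↦ ⟨?_, ?_⟩⟩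
  · have hsup := rpow_mul_reducedFiber_le_sSup hpγ hpr ht hX hA hB hBX
    have hlamC : lam * C ≤ lam * (c₆ * X ^ r) := by gcongr
    linarith
  · exact mul_pos (sub_pos.2 ((lt_div_iff₀ hc₆).1 hlt)) (rpow_pos_of_pos hX r)

/-- Abstract form of estimate (10): the maximum of the reduced fiber function
strictly exceeds `λ‖u‖_r^r` uniformly for all small `λ > 0`. -/
theorem fiber_sup_exceeds (p r γ S c₅ c₆ : ℝ)
    (hp : 1 < p) (hpr : p < r) (hγ0 : 0 < γ) (hγ1 : γ < 1)
    (hS : 0 < S) (hc₅ : 0 < c₅) (hc₆ : 0 < c₆) :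
    ∃ c₇ > 0, ∃ lamStar > 0, ∀ lam : ℝ, 0 < lam → lam < lamStar →
      ∀ X : ℝ, 0 < X → ∀ A B C : ℝ,
        S * X ^ p ≤ A → 0 < B → B ≤ c₅ * X ^ (1 - γ) →
        0 ≤ C → C ≤ c₆ * X ^ r →
        sSup {y : ℝ | ∃ t : ℝ, 0 < t ∧ y = t ^ (p - r) * A - t ^ (1 - r - γ) * B}
            - lam * C ≥ (c₇ - lam * c₆) * X ^ r
          ∧ 0 < (c₇ - lam * c₆) * X ^ r := by
  obtain ⟨c₇, hc₇, lamStar, hStar, h⟩ :=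
    fiber_sup_exceeds_general (γ := γ) c₅ (by linarith) hpr.le hS hc₆
  refine ⟨c₇, hc₇, lamStar, hStar, fun lam hlam hlt X hX A B C hA hB hBX _ hC ↦ ?_⟩
  simpa only [image, reducedFiber, mem_Ioi, eq_comm] using
    h lam hlam.le hlt X hX A B C hA hB hBX hC
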